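/- arXiv:1207.0472 — 2 statements merged into one kernel-verified Lean document; each statement's English description precedes it below -/
import Mathlib

section
/- Let g be a Leibniz n-algebra over K. Then (D_n(g), ω₁) is a Leibniz algebra: for all u, v, w ∈ g^{⊗(n−1)}, ω₁(ω₁(u,v), w) = ω₁(ω₁(u,w), v) + ω₁(u, ω₁(v,w)). -/
open scoped TensorProduct
open PiTensorProduct

/-!
For `v` in the tensor power let `ρ v` be the endomorphism of `g` given on pure tensors by
`ρ (b₁ ⊗ ⋯ ⊗ bₘ) x = [x, b₁, …, bₘ]`. Then `ω₁ u v = δ (ρ v) u`, where `δ f` is the sum of the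
actions of `f` on the single tensor factors. Endomorphisms acting on different factors commute, so
`δ` is a Lie algebra homomorphism, and the fundamental identity says exactly that
`⁅ρ w, ρ v⁆ = ρ (ω₁ v w)`. Hence `⁅δ (ρ w), δ (ρ v)⁆ = δ (ρ (ω₁ v w))`, which is the Leibniz
identity for `ω₁`.
-/

attribute [local instance] LieRing.ofAssociativeRing

section TensorDerivation

variable {ι R : Type*} [DecidableEq ι] [CommRing R] {s : ι → Type*} [∀ i, AddCommGroup (s i)]
  [∀ i, Module R (s i)]

/-- The action of the endomorphisms of `s i` on the `i`-th factor of `⨂[R] j, s j`. -/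
noncomputable def tensorFactorEnd (i : ι) :
    Module.End R (s i) →ₐ[R] Module.End R (⨂[R] j, s j) :=
  let φ := mapMonoidHom.comp (MonoidHom.mulSingle (fun j => Module.End R (s j)) i)
  AlgHom.ofLinearMap ((mapMultilinear R s s).toLinearMap 1 i) φ.map_one φ.map_mul

lemma tensorFactorEnd_apply (i : ι) (f : Module.End R (s i)) :
    tensorFactorEnd i f = mapMonoidHom (Pi.mulSingle i f) :=
  rfl

lemma tensorFactorEnd_tprod (i : ι) (f : Module.End R (s i)) (a : ∀ j, s j) :
    tensorFactorEnd i f (tprod R a) = tprod R (Function.update a i (f (a i))) := by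
  rw [tensorFactorEnd_apply]
  refine (map_tprod _ a).trans (congrArg (PiTensorProduct.tprod R) (funext fun j => ?_))
  exact Function.apply_update (fun j (h : Module.End R (s j)) => h (a j)) 1 i f j

lemma commute_tensorFactorEnd {i j : ι} (hij : i ≠ j) (f : Module.End R (s i))
    (h : Module.End R (s j)) : Commute (tensorFactorEnd i f) (tensorFactorEnd j h) := by
  simpa only [tensorFactorEnd_apply] using (Pi.mulSingle_commute hij f h).map mapMonoidHom

variable [Fintype ι]

lemma lie_sum_tensorFactorEnd (f h : ∀ i, Module.End R (s i)) :
    ⁅∑ i, tensorFactorEnd i (f i), ∑ j, tensorFactorEnd j (h j)⁆ =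
      ∑ i, tensorFactorEnd i ⁅f i, h i⁆ := by
  rw [sum_lie_sum]
  refine Finset.sum_congr rfl fun i _ => ?_
  rw [Finset.sum_eq_single_of_mem i (Finset.mem_univ i)
    fun j _ hji => (commute_tensorFactorEnd hji.symm (f i) (h j)).lie_eq]
  exact ((tensorFactorEnd i).toLieHom.map_lie (f i) (h i)).symm

/-- The endomorphism `∑ i, 1 ⊗ ⋯ ⊗ f i ⊗ ⋯ ⊗ 1` of `⨂[R] i, s i` induced by a family `f` of
endomorphisms of the factors. -/
noncomputable def tensorDerivation :
    (∀ i, Module.End R (s i)) →ₗ⁅R⁆ Module.End R (⨂[R] i, s i) where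
  toLinearMap := ∑ i, (tensorFactorEnd i).toLinearMap ∘ₗ LinearMap.proj i
  map_lie' {f h} := by
    simp only [AddHom.toFun_eq_coe, LinearMap.coe_toAddHom, LinearMap.sum_apply]
    exact (lie_sum_tensorFactorEnd f h).symm

lemma tensorDerivation_tprod (f : ∀ i, Module.End R (s i)) (a : ∀ i, s i) :
    tensorDerivation f (tprod R a) = ∑ i, tprod R (Function.update a i (f i (a i))) := by
  have sum_factors : tensorDerivation f = ∑ i, tensorFactorEnd i (f i) := LinearMap.sum_apply ..
  simp only [sum_factors, LinearMap.sum_apply, tensorFactorEnd_tprod]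

end TensorDerivation

section LeibnizBracket

variable {R g : Type*} [CommRing R] [AddCommGroup g] [Module R g] {m : ℕ}

/-- The fundamental identity for an `(m + 1)`-ary bracket: right multiplications are derivations.
It says that `br` makes `g` a Leibniz `(m + 1)`-algebra. -/
def IsLeibnizBracket (br : MultilinearMap R (fun _ : Fin (m + 1) => g) g) : Prop :=
  ∀ (x : Fin (m + 1) → g) (y : Fin m → g),
    br (Fin.cons (br x) y) = ∑ i, br (Function.update x i (br (Fin.cons (x i) y)))

/-- Right multiplication `b₁ ⊗ ⋯ ⊗ bₘ ↦ [-, b₁, …, bₘ]`, extended linearly to the tensor power. -/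
noncomputable def rightMultiplication (br : MultilinearMap R (fun _ : Fin (m + 1) => g) g) :
    (⨂[R]^m g) →ₗ[R] Module.End R g :=
  (lift.toLinearMap ∘ₗ br.curryLeft).flip

lemma rightMultiplication_tprod (br : MultilinearMap R (fun _ : Fin (m + 1) => g) g)
    (b : Fin m → g) (x : g) : rightMultiplication br (tprod R b) x = br (Fin.cons x b) :=
  lift.tprod b

/-- The bracket `ω₁` on the tensor power `⨂[R]^m g` induced by an `(m + 1)`-ary bracket on `g`. -/
noncomputable def tensorPowerBracket (br : MultilinearMap R (fun _ : Fin (m + 1) => g) g) :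
    (⨂[R]^m g) →ₗ[R] (⨂[R]^m g) →ₗ[R] (⨂[R]^m g) :=
  (tensorDerivation.toLinearMap ∘ₗ LinearMap.pi fun _ => rightMultiplication br).flip

lemma tensorPowerBracket_apply (br : MultilinearMap R (fun _ : Fin (m + 1) => g) g)
    (u v : ⨂[R]^m g) :
    tensorPowerBracket br u v = tensorDerivation (fun _ => rightMultiplication br v) u :=
  rfl

lemma tensorPowerBracket_tprod_tprod (br : MultilinearMap R (fun _ : Fin (m + 1) => g) g)
    (a b : Fin m → g) :
    tensorPowerBracket br (tprod R a) (tprod R b) =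
      ∑ i, tprod R (Function.update a i (br (Fin.cons (a i) b))) := by
  simp only [tensorPowerBracket_apply, tensorDerivation_tprod, rightMultiplication_tprod]

variable {br : MultilinearMap R (fun _ : Fin (m + 1) => g) g}

lemma eq_tensorPowerBracket_of_tprod {ω : (⨂[R]^m g) →ₗ[R] (⨂[R]^m g) →ₗ[R] (⨂[R]^m g)}
    (hω : ∀ a b : Fin m → g, ω (tprod R a) (tprod R b) =
      ∑ i, tprod R (Function.update a i (br (Fin.cons (a i) b)))) :
    ω = tensorPowerBracket br := by
  ext a b
  exact (hω a b).trans (tensorPowerBracket_tprod_tprod br a b).symm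

namespace IsLeibnizBracket

lemma cons_bracket (hbr : IsLeibnizBracket br) (x : g) (b c : Fin m → g) :
    br (Fin.cons (br (Fin.cons x b)) c) = br (Fin.cons (br (Fin.cons x c)) b) +
      ∑ k, br (Fin.cons x (Function.update b k (br (Fin.cons (b k) c)))) := by
  rw [hbr, Fin.sum_univ_succ]
  simp only [Fin.cons_zero, Fin.cons_succ, Fin.update_cons_zero, Fin.cons_update]

lemma lie_rightMultiplication_tprod (hbr : IsLeibnizBracket br) (b c : Fin m → g) :
    ⁅rightMultiplication br (tprod R c), rightMultiplication br (tprod R b)⁆ =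
      rightMultiplication br (tensorPowerBracket br (tprod R b) (tprod R c)) := by
  ext x
  simp only [Ring.lie_def, LinearMap.sub_apply, Module.End.mul_apply,
    tensorPowerBracket_tprod_tprod, map_sum, LinearMap.sum_apply, rightMultiplication_tprod,
    hbr.cons_bracket x b c, add_sub_cancel_left]

lemma lie_rightMultiplication (hbr : IsLeibnizBracket br) (v w : ⨂[R]^m g) :
    ⁅rightMultiplication br w, rightMultiplication br v⁆ =
      rightMultiplication br (tensorPowerBracket br v w) := by
  induction v using PiTensorProduct.induction_on with
  | add v₁ v₂ h₁ h₂ => simp only [map_add, lie_add, LinearMap.add_apply, h₁, h₂]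
  | smul_tprod r b =>
    induction w using PiTensorProduct.induction_on with
    | add w₁ w₂ h₁ h₂ => simp only [map_add, add_lie, h₁, h₂]
    | smul_tprod t c =>
      simp only [map_smul, smul_lie, lie_smul, LinearMap.smul_apply,
        hbr.lie_rightMultiplication_tprod, smul_comm t r]

theorem tensorPowerBracket_leibniz (hbr : IsLeibnizBracket br) (u v w : ⨂[R]^m g) :
    tensorPowerBracket br (tensorPowerBracket br u v) w =
      tensorPowerBracket br (tensorPowerBracket br u w) v +
        tensorPowerBracket br u (tensorPowerBracket br v w) := by
  let δ (z : ⨂[R]^m g) : Module.End R (⨂[R]^m g) :=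
    tensorDerivation fun _ => rightMultiplication br z
  have lie_δ : ⁅δ w, δ v⁆ = δ (tensorPowerBracket br v w) := by
    simp only [δ, ← LieHom.map_lie, ← hbr.lie_rightMultiplication]
    rfl
  change δ w (δ v u) = δ v (δ w u) + δ (tensorPowerBracket br v w) u
  rw [← lie_δ, Ring.lie_def, LinearMap.sub_apply, Module.End.mul_apply, Module.End.mul_apply,
    add_sub_cancel]

end IsLeibnizBracket

end LeibnizBracket

theorem statement15_general {R g : Type*} [CommRing R] [AddCommGroup g] [Module R g] {m : ℕ}
    (br : MultilinearMap R (fun _ : Fin (m + 1) => g) g)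
    (fund : ∀ (x : Fin (m + 1) → g) (y : Fin m → g),
      br (Fin.cons (br x) y) = ∑ i, br (Function.update x i (br (Fin.cons (x i) y))))
    (ω₁ : (⨂[R]^m g) →ₗ[R] (⨂[R]^m g) →ₗ[R] (⨂[R]^m g))
    (hω₁ : ∀ a b : Fin m → g, ω₁ (tprod R a) (tprod R b) =
      ∑ i, tprod R (Function.update a i (br (Fin.cons (a i) b)))) (u v w : ⨂[R]^m g) :
    ω₁ (ω₁ u v) w = ω₁ (ω₁ u w) v + ω₁ u (ω₁ v w) := by
  obtain rfl := eq_tensorPowerBracket_of_tprod hω₁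
  exact IsLeibnizBracket.tensorPowerBracket_leibniz fund u v w

/-- Let `g` be a Leibniz `n`-algebra over a field `K` of characteristic `≠ 2`
(write `n = m + 1`, `n ≥ 2`).  Then `(Dₙ(g), ω₁)` is a Leibniz algebra, where
`Dₙ(g) = g^{⊗(n-1)}` and `ω₁` is the bilinear map determined on pure tensors by
`ω₁(a₁⊗…⊗a_{n-1}, b₁⊗…⊗b_{n-1}) = Σᵢ a₁⊗…⊗[aᵢ,b₁,…,b_{n-1}]⊗…⊗a_{n-1}`:
for all `u v w`, `ω₁(ω₁(u,v),w) = ω₁(ω₁(u,w),v) + ω₁(u,ω₁(v,w))`. -/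
theorem statement15 (K : Type) [Field K] (hchar : ringChar K ≠ 2)
    (g : Type) [AddCommGroup g] [Module K g] (m : ℕ) (hm : 1 ≤ m)
    (br : MultilinearMap K (fun _ : Fin (m+1) => g) g)
    (fund : ∀ (x : Fin (m+1) → g) (y : Fin m → g),
      br (Fin.cons (br x) y)
        = ∑ i : Fin (m+1), br (Function.update x i (br (Fin.cons (x i) y))))
    (ω₁ : (⨂[K]^m g) →ₗ[K] (⨂[K]^m g) →ₗ[K] (⨂[K]^m g))
    (hω₁ : ∀ a b : Fin m → g,
      ω₁ (tprod K a) (tprod K b)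
        = ∑ i : Fin m, tprod K (Function.update a i (br (Fin.cons (a i) b)))) :
    ∀ u v w : ⨂[K]^m g, ω₁ (ω₁ u v) w = ω₁ (ω₁ u w) v + ω₁ u (ω₁ v w) :=
  statement15_general br fund ω₁ hω₁
end

section
/- Let g be an n-Filippov algebra over K. Then there is a unique bilinear map ω̄₀ : L_n(g) × L_n(g) → L_n(g) satisfying ω̄₀(a₁∧…∧a_{n−1}, b₁∧…∧b_{n−1}) = Σ_{i=1}^{n−1} a₁∧…∧[a_i,b₁,…,b_{n−1}]∧…∧a_{n−1}, and (L_n(g), ω̄₀) is a Leibniz algebra: ω̄₀(ω̄₀(u,v), w) = ω̄₀(ω̄₀(u,w), v) + ω̄₀(u, ω̄₀(v,w)) for all u, v, w ∈ L_n(g). -/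
open scoped TensorProduct
open PiTensorProduct

/-- The pure wedge `a₁ ∧ … ∧ a_m` as an element of the `m`-th exterior power `⋀[K]^m g`. -/
noncomputable def wedge (K : Type) [Field K] {g : Type} [AddCommGroup g] [Module K g] {m : ℕ}
    (a : Fin m → g) : ⋀[K]^m g :=
  ⟨ExteriorAlgebra.ιMulti K m a, ExteriorAlgebra.ιMulti_range K m ⟨a, rfl⟩⟩

/-!
An endomorphism `D` of `M` extends to a derivation `D̂` of `⋀ⁿ M`, and `D ↦ D̂` is a homomorphism of
Lie algebras. Writing `R_w` for the right multiplication by `w ∈ ⋀ⁿ M`, the required bracket is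
`ω̄₀(u, w) = R̂_w u`. The fundamental identity says that every `R_w` is a derivation of the bracket
of `M`, and for a derivation `D` one has `R_{D̂ v} = [D, R_v]`. The Leibniz identity is this
equality for `D = R_w`, transported by `D ↦ D̂` and applied to `u`.
-/

section MultilinearDeriv

variable {R M N ι : Type*} [CommSemiring R] [AddCommMonoid M] [Module R M]
  [AddCommMonoid N] [Module R N] [DecidableEq ι]

theorem compLinearMap_update_id_apply (f : MultilinearMap R (fun _ : ι ↦ M) N)
    (D : Module.End R M) (i : ι) (a : ι → M) :
    f.compLinearMap (Function.update (fun _ ↦ LinearMap.id) i D) a =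
      f (Function.update a i (D (a i))) := by
  rw [MultilinearMap.compLinearMap_apply]
  congr 1
  ext j
  obtain rfl | hj := eq_or_ne j i <;> simp [*]

variable [Fintype ι]

/-- The derivative `a ↦ ∑ i, f (a₁, …, D aᵢ, …, aₙ)` of a multilinear map `f` along an
endomorphism `D` of its source, as a linear function of `D`. -/
def multilinearDeriv (f : MultilinearMap R (fun _ : ι ↦ M) N) :
    Module.End R M →ₗ[R] MultilinearMap R (fun _ : ι ↦ M) N where
  toFun D := ∑ i, f.compLinearMap (Function.update (fun _ ↦ LinearMap.id) i D)
  map_add' D E := by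
    ext a
    simp only [sum_apply, add_apply, compLinearMap_update_id_apply,
      LinearMap.add_apply, MultilinearMap.map_update_add, Finset.sum_add_distrib]
  map_smul' c D := by
    ext a
    simp only [sum_apply, smul_apply, compLinearMap_update_id_apply,
      LinearMap.smul_apply, MultilinearMap.map_update_smul, Finset.smul_sum, RingHom.id_apply]

theorem multilinearDeriv_apply (f : MultilinearMap R (fun _ : ι ↦ M) N) (D : Module.End R M)
    (a : ι → M) : multilinearDeriv f D a = ∑ i, f (Function.update a i (D (a i))) := by
  simp only [multilinearDeriv, LinearMap.coe_mk, AddHom.coe_mk, sum_apply,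
    compLinearMap_update_id_apply]

end MultilinearDeriv

section AlternatingDeriv

variable {R M N N' ι : Type*} [CommSemiring R] [AddCommMonoid M] [Module R M]
  [AddCommMonoid N] [Module R N] [AddCommMonoid N'] [Module R N'] [DecidableEq ι]

theorem map_update_add_map_update_of_eq (f : M [⋀^ι]→ₗ[R] N) {a : ι → M} {i j : ι}
    (ha : a i = a j) (hij : i ≠ j) (x : M) :
    f (Function.update a i x) + f (Function.update a j x) = 0 := by
  have ha_swap : a ∘ Equiv.swap i j = a := by simp [Equiv.comp_swap_eq_update, ha]
  have hswap : Function.update a i x ∘ Equiv.swap i j = Function.update a j x := by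
    rw [Function.update_comp_equiv, ha_swap, Equiv.symm_swap, Equiv.swap_apply_left]
  rw [← hswap, f.map_add_swap _ hij]

variable [Fintype ι]

theorem sum_map_update_eq_zero_of_eq (f : M [⋀^ι]→ₗ[R] N) (D : Module.End R M) {a : ι → M}
    {i j : ι} (ha : a i = a j) (hij : i ≠ j) :
    ∑ k, f (Function.update a k (D (a k))) = 0 := by
  rw [Fintype.sum_eq_add i j hij, ← ha, map_update_add_map_update_of_eq f ha hij]
  rintro k ⟨hki, hkj⟩
  exact f.map_eq_zero_of_eq _ (by simp [hki.symm, hkj.symm, ha]) hij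

/-- The derivative of an alternating map along an endomorphism of its source, again as an
alternating map. -/
def alternatingDeriv (f : M [⋀^ι]→ₗ[R] N) : Module.End R M →ₗ[R] M [⋀^ι]→ₗ[R] N where
  toFun D :=
    { multilinearDeriv f.toMultilinearMap D with
      map_eq_zero_of_eq' _ _ _ ha hij :=
        (multilinearDeriv_apply _ D _).trans (sum_map_update_eq_zero_of_eq f D ha hij) }
  map_add' D E := AlternatingMap.coe_multilinearMap_injective (map_add (multilinearDeriv _) D E)
  map_smul' c D := AlternatingMap.coe_multilinearMap_injective (map_smul (multilinearDeriv _) c D)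

theorem alternatingDeriv_apply (f : M [⋀^ι]→ₗ[R] N) (D : Module.End R M) (a : ι → M) :
    alternatingDeriv f D a = ∑ i, f (Function.update a i (D (a i))) :=
  multilinearDeriv_apply f.toMultilinearMap D a

theorem compAlternatingMap_alternatingDeriv (φ : N →ₗ[R] N') (f : M [⋀^ι]→ₗ[R] N)
    (D : Module.End R M) :
    φ.compAlternatingMap (alternatingDeriv f D) = alternatingDeriv (φ.compAlternatingMap f) D := by
  ext a
  simp [alternatingDeriv_apply]

theorem alternatingDeriv_alternatingDeriv_apply (f : M [⋀^ι]→ₗ[R] N) (D E : Module.End R M)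
    (a : ι → M) :
    alternatingDeriv (alternatingDeriv f D) E a =
      alternatingDeriv f (D * E) a + ∑ i, ∑ j ∈ Finset.univ.erase i,
        f (Function.update (Function.update a i (E (a i))) j (D (a j))) := by
  simp only [alternatingDeriv_apply, ← Finset.sum_add_distrib]
  refine Finset.sum_congr rfl fun i _ ↦ ?_
  rw [← Finset.add_sum_erase _ _ (Finset.mem_univ i)]
  congr 1
  · simp
  · refine Finset.sum_congr rfl fun j hj ↦ ?_
    rw [Function.update_of_ne (Finset.ne_of_mem_erase hj)]

theorem curryLeft_alternatingDeriv {n : ℕ} (f : M [⋀^Fin (n + 1)]→ₗ[R] N) (D : Module.End R M)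
    (x : M) :
    (alternatingDeriv f D).curryLeft x =
      f.curryLeft (D x) + alternatingDeriv (f.curryLeft x) D := by
  ext a
  simp [alternatingDeriv_apply, Fin.sum_univ_succ, Matrix.vecCons, Fin.cons_update]

/-- Only the terms in which both endomorphisms hit the same argument survive antisymmetrization. -/
theorem alternatingDeriv_lie {M N : Type*} [AddCommGroup M] [Module R M] [AddCommGroup N]
    [Module R N] (f : M [⋀^ι]→ₗ[R] N) (D E : Module.End R M) :
    alternatingDeriv f ⁅D, E⁆ =
      alternatingDeriv (alternatingDeriv f D) E - alternatingDeriv (alternatingDeriv f E) D := by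
  ext a
  have hoff : ∑ i, ∑ j ∈ Finset.univ.erase i,
        f (Function.update (Function.update a i (E (a i))) j (D (a j))) =
      ∑ i, ∑ j ∈ Finset.univ.erase i,
        f (Function.update (Function.update a i (D (a i))) j (E (a j))) := by
    rw [Finset.sum_comm' (t' := Finset.univ) (s' := fun j ↦ Finset.univ.erase j)
      (by simp [ne_comm])]
    refine Finset.sum_congr rfl fun j _ ↦ Finset.sum_congr rfl fun i hi ↦ ?_
    rw [Function.update_comm (Finset.ne_of_mem_erase hi)]
  simp only [Ring.lie_def, map_sub, AlternatingMap.sub_apply,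
    alternatingDeriv_alternatingDeriv_apply, hoff, add_sub_add_right_eq_sub]

end AlternatingDeriv

section ExteriorPowerDeriv

variable {R M N : Type*} [CommRing R] [AddCommGroup M] [Module R M] [AddCommGroup N] [Module R N]
  {n : ℕ}

open exteriorPower (ιMulti alternatingMapLinearEquiv)

variable (R M n) in
/-- The extension of endomorphisms of `M` to derivations of the exterior power,
`a₁ ∧ … ∧ aₙ ↦ ∑ i, a₁ ∧ … ∧ D aᵢ ∧ … ∧ aₙ`. -/
noncomputable def exteriorPowerDeriv : Module.End R M →ₗ[R] Module.End R (⋀[R]^n M) :=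
  alternatingMapLinearEquiv.toLinearMap ∘ₗ alternatingDeriv (ιMulti R n)

theorem exteriorPowerDeriv_apply (D : Module.End R M) :
    exteriorPowerDeriv R M n D = alternatingMapLinearEquiv (alternatingDeriv (ιMulti R n) D) :=
  rfl

theorem exteriorPowerDeriv_ιMulti (D : Module.End R M) (a : Fin n → M) :
    exteriorPowerDeriv R M n D (ιMulti R n a) =
      ∑ i, ιMulti R n (Function.update a i (D (a i))) := by
  rw [exteriorPowerDeriv_apply, exteriorPower.alternatingMapLinearEquiv_apply_ιMulti,
    alternatingDeriv_apply]

theorem alternatingMapLinearEquiv_comp_exteriorPowerDeriv (f : M [⋀^Fin n]→ₗ[R] N)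
    (D : Module.End R M) :
    alternatingMapLinearEquiv f ∘ₗ exteriorPowerDeriv R M n D =
      alternatingMapLinearEquiv (alternatingDeriv f D) := by
  rw [exteriorPowerDeriv_apply, ← exteriorPower.alternatingMapLinearEquiv_comp,
    compAlternatingMap_alternatingDeriv, exteriorPower.alternatingMapLinearEquiv_comp_ιMulti]

theorem exteriorPowerDeriv_mul_exteriorPowerDeriv (D E : Module.End R M) :
    exteriorPowerDeriv R M n D * exteriorPowerDeriv R M n E =
      alternatingMapLinearEquiv (alternatingDeriv (alternatingDeriv (ιMulti R n) D) E) :=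
  alternatingMapLinearEquiv_comp_exteriorPowerDeriv _ E

theorem exteriorPowerDeriv_lie (D E : Module.End R M) :
    exteriorPowerDeriv R M n ⁅D, E⁆ =
      ⁅exteriorPowerDeriv R M n D, exteriorPowerDeriv R M n E⁆ := by
  rw [Ring.lie_def (exteriorPowerDeriv R M n D), exteriorPowerDeriv_mul_exteriorPowerDeriv,
    exteriorPowerDeriv_mul_exteriorPowerDeriv, exteriorPowerDeriv_apply, alternatingDeriv_lie]
  exact map_sub alternatingMapLinearEquiv _ _

theorem exteriorPower_bilinearMap_ext {m : ℕ} {P : Type*} [AddCommGroup P] [Module R P]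
    {f f' : ⋀[R]^m M →ₗ[R] ⋀[R]^n N →ₗ[R] P}
    (h : ∀ a b, f (ιMulti R m a) (ιMulti R n b) = f' (ιMulti R m a) (ιMulti R n b)) : f = f' := by
  ext a b
  exact h a b

end ExteriorPowerDeriv

section Filippov

variable {R M : Type*} [CommRing R] [AddCommGroup M] [Module R M] {n : ℕ}

open exteriorPower (ιMulti alternatingMapLinearEquiv)

/-- Right multiplication `x ↦ [x, b₁, …, bₙ]` by `b₁ ∧ … ∧ bₙ` for an alternating bracket. -/
noncomputable def rightMul (br : M [⋀^Fin (n + 1)]→ₗ[R] M) : ⋀[R]^n M →ₗ[R] Module.End R M :=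
  (alternatingMapLinearEquiv.toLinearMap ∘ₗ br.curryLeft).flip

theorem rightMul_ιMulti_apply (br : M [⋀^Fin (n + 1)]→ₗ[R] M) (b : Fin n → M) (x : M) :
    rightMul br (ιMulti R n b) x = br (Fin.cons x b) :=
  exteriorPower.alternatingMapLinearEquiv_apply_ιMulti (br.curryLeft x) b

/-- The derivations of an alternating bracket: endomorphisms `D` with
`D [x₁, …, xₙ] = ∑ i, [x₁, …, D xᵢ, …, xₙ]`. -/
def bracketDerivations (br : M [⋀^Fin n]→ₗ[R] M) : Submodule R (Module.End R M) :=
  LinearMap.eqLocus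
    { toFun D := D.compAlternatingMap br
      map_add' _ _ := rfl
      map_smul' _ _ := rfl }
    (alternatingDeriv br)

theorem mem_bracketDerivations {br : M [⋀^Fin n]→ₗ[R] M} {D : Module.End R M} :
    D ∈ bracketDerivations br ↔ D.compAlternatingMap br = alternatingDeriv br D :=
  Iff.rfl

theorem rightMul_exteriorPowerDeriv {br : M [⋀^Fin (n + 1)]→ₗ[R] M} {D : Module.End R M}
    (hD : D ∈ bracketDerivations br) (v : ⋀[R]^n M) :
    rightMul br (exteriorPowerDeriv R M n D v) = ⁅D, rightMul br v⁆ := by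
  ext x
  have hcurry : D.compAlternatingMap (br.curryLeft x) =
      br.curryLeft (D x) + alternatingDeriv (br.curryLeft x) D := by
    rw [← AlternatingMap.curryLeft_compAlternatingMap, mem_bracketDerivations.mp hD,
      curryLeft_alternatingDeriv]
  have hmul : D (rightMul br v x) =
      rightMul br v (D x) + alternatingMapLinearEquiv (alternatingDeriv (br.curryLeft x) D) v := by
    have hv := congrArg (alternatingMapLinearEquiv · v) hcurry
    rwa [exteriorPower.alternatingMapLinearEquiv_comp, map_add] at hv
  calc rightMul br (exteriorPowerDeriv R M n D v) x
      = alternatingMapLinearEquiv (alternatingDeriv (br.curryLeft x) D) v :=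
        LinearMap.congr_fun (alternatingMapLinearEquiv_comp_exteriorPowerDeriv _ D) v
    _ = D (rightMul br v x) - rightMul br v (D x) := eq_sub_of_add_eq' hmul.symm

/-- The fundamental identity of `(n + 1)`-Filippov algebras, for an alternating bracket. -/
def FundamentalIdentity (br : M [⋀^Fin (n + 1)]→ₗ[R] M) : Prop :=
  ∀ (x : Fin (n + 1) → M) (y : Fin n → M),
    br (Fin.cons (br x) y) = ∑ i, br (Function.update x i (br (Fin.cons (x i) y)))

theorem FundamentalIdentity.rightMul_mem_bracketDerivations {br : M [⋀^Fin (n + 1)]→ₗ[R] M}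
    (hbr : FundamentalIdentity br) (w : ⋀[R]^n M) : rightMul br w ∈ bracketDerivations br := by
  suffices hspan : Submodule.span R (Set.range (ιMulti R n)) ≤
      (bracketDerivations br).comap (rightMul br) by
    rw [exteriorPower.ιMulti_span] at hspan
    exact hspan Submodule.mem_top
  rw [Submodule.span_le]
  rintro _ ⟨y, rfl⟩
  refine mem_bracketDerivations.mpr (AlternatingMap.ext fun x ↦ ?_)
  simpa only [LinearMap.compAlternatingMap_apply, alternatingDeriv_apply, rightMul_ιMulti_apply]
    using hbr x y

/-- The bracket `ω̄₀` induced on the `n`-th exterior power by an alternating `(n + 1)`-ary bracket: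
`w` acts on `u` by the derivation extending the right multiplication by `w`. -/
noncomputable def exteriorBracket (br : M [⋀^Fin (n + 1)]→ₗ[R] M) :
    ⋀[R]^n M →ₗ[R] ⋀[R]^n M →ₗ[R] ⋀[R]^n M :=
  (exteriorPowerDeriv R M n ∘ₗ rightMul br).flip

theorem exteriorBracket_apply (br : M [⋀^Fin (n + 1)]→ₗ[R] M) (u w : ⋀[R]^n M) :
    exteriorBracket br u w = exteriorPowerDeriv R M n (rightMul br w) u :=
  rfl

theorem exteriorBracket_ιMulti (br : M [⋀^Fin (n + 1)]→ₗ[R] M) (a b : Fin n → M) :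
    exteriorBracket br (ιMulti R n a) (ιMulti R n b) =
      ∑ i, ιMulti R n (Function.update a i (br (Fin.cons (a i) b))) := by
  simp only [exteriorBracket_apply, exteriorPowerDeriv_ιMulti, rightMul_ιMulti_apply]

theorem eq_exteriorBracket {br : M [⋀^Fin (n + 1)]→ₗ[R] M}
    {f : ⋀[R]^n M →ₗ[R] ⋀[R]^n M →ₗ[R] ⋀[R]^n M}
    (hf : ∀ a b : Fin n → M, f (ιMulti R n a) (ιMulti R n b) =
      ∑ i, ιMulti R n (Function.update a i (br (Fin.cons (a i) b)))) :
    f = exteriorBracket br :=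
  exteriorPower_bilinearMap_ext fun a b ↦ (hf a b).trans (exteriorBracket_ιMulti br a b).symm

theorem FundamentalIdentity.exteriorBracket_leibniz {br : M [⋀^Fin (n + 1)]→ₗ[R] M}
    (hbr : FundamentalIdentity br) (u v w : ⋀[R]^n M) :
    exteriorBracket br (exteriorBracket br u v) w =
      exteriorBracket br (exteriorBracket br u w) v +
        exteriorBracket br u (exteriorBracket br v w) := by
  have hlie : exteriorBracket br u (exteriorBracket br v w) =
      ⁅exteriorPowerDeriv R M n (rightMul br w), exteriorPowerDeriv R M n (rightMul br v)⁆ u := by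
    rw [exteriorBracket_apply, exteriorBracket_apply,
      rightMul_exteriorPowerDeriv (hbr.rightMul_mem_bracketDerivations w), exteriorPowerDeriv_lie]
  rw [hlie, Ring.lie_def, LinearMap.sub_apply]
  simp only [exteriorBracket_apply, Module.End.mul_apply, add_sub_cancel]

theorem statement16_general (br : M [⋀^Fin (n + 1)]→ₗ[R] M) (hbr : FundamentalIdentity br) :
    (∃! f : ⋀[R]^n M →ₗ[R] ⋀[R]^n M →ₗ[R] ⋀[R]^n M,
      ∀ a b : Fin n → M, f (ιMulti R n a) (ιMulti R n b) =
        ∑ i, ιMulti R n (Function.update a i (br (Fin.cons (a i) b)))) ∧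
    ∀ f : ⋀[R]^n M →ₗ[R] ⋀[R]^n M →ₗ[R] ⋀[R]^n M,
      (∀ a b : Fin n → M, f (ιMulti R n a) (ιMulti R n b) =
        ∑ i, ιMulti R n (Function.update a i (br (Fin.cons (a i) b)))) →
      ∀ u v w : ⋀[R]^n M, f (f u v) w = f (f u w) v + f u (f v w) := by
  refine ⟨⟨exteriorBracket br, exteriorBracket_ιMulti br, fun f hf ↦ eq_exteriorBracket hf⟩, ?_⟩
  intro f hf
  rw [eq_exteriorBracket hf]
  exact hbr.exteriorBracket_leibniz

end Filippov

/-- Let `g` be an `n`-Filippov algebra over a field `K` of characteristic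
`≠ 2` (write `n = m + 1`, `n ≥ 2`).  Then there is a unique bilinear map
`ω̄₀ : Lₙ(g) × Lₙ(g) → Lₙ(g)` (where `Lₙ(g) = g^{∧(n-1)}`) satisfying
`ω̄₀(a₁∧…∧a_{n-1}, b₁∧…∧b_{n-1}) = Σᵢ a₁∧…∧[aᵢ,b₁,…,b_{n-1}]∧…∧a_{n-1}`, and
`(Lₙ(g), ω̄₀)` is a Leibniz algebra. -/
theorem statement16 (K : Type) [Field K] (hchar : ringChar K ≠ 2)
    (g : Type) [AddCommGroup g] [Module K g] (m : ℕ) (hm : 1 ≤ m)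
    (br : MultilinearMap K (fun _ : Fin (m+1) => g) g)
    (fund : ∀ (x : Fin (m+1) → g) (y : Fin m → g),
      br (Fin.cons (br x) y)
        = ∑ i : Fin (m+1), br (Function.update x i (br (Fin.cons (x i) y))))
    (alt : ∀ (x : Fin (m+1) → g) (i j : Fin (m+1)), i ≠ j → x i = x j → br x = 0) :
    (∃! f : (⋀[K]^m g) →ₗ[K] (⋀[K]^m g) →ₗ[K] (⋀[K]^m g),
      ∀ a b : Fin m → g,
        f (wedge K a) (wedge K b)
          = ∑ i : Fin m, wedge K (Function.update a i (br (Fin.cons (a i) b)))) ∧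
    (∀ f : (⋀[K]^m g) →ₗ[K] (⋀[K]^m g) →ₗ[K] (⋀[K]^m g),
      (∀ a b : Fin m → g,
        f (wedge K a) (wedge K b)
          = ∑ i : Fin m, wedge K (Function.update a i (br (Fin.cons (a i) b)))) →
      ∀ u v w : ⋀[K]^m g, f (f u v) w = f (f u w) v + f u (f v w)) :=
  statement16_general
    { br with map_eq_zero_of_eq' := fun x i j hx hij ↦ alt x i j hij hx } fund
end
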